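/- Let α ∈ [0,1] and let m : ℕ → ℕ satisfy m(n) < n for all n and m(n)/n → α as n → ∞. Then the limit superior as n → ∞ of Z(n, m(n))/n² is at least α². -/

import Mathlib

/-!
The proof shows `m² ≤ Z(n, m) ≤ n²` for `m < n`; dividing by `n²` and letting `n → ∞` gives the
claim, the upper bound serving only to make the supremum and the limit superior meaningful.

*Upper bound* (`card_zeros_le`). On a finite set `S` of zeros, the equation and its conjugate
express `z ^ n` and `conj z ^ n` through monomials `z ^ i * conj z ^ j` of lower total degree. Hence
the `n²` monomials with `i, j < n` span all monomials on `S`, and thus, by Lagrange interpolation,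
all functions `S → ℂ`, so `#S ≤ n²`.

*Lower bound* (`exists_many_zeros`). The equations `Re (z ^ m) = 0` and `Re (c (z - 1) ^ m) = 0`,
with `c = exp (π i / 4)`, describe `m` lines through `0` and `m` lines through `1`. These meet in
`m²` points, and `Re (z ^ m) + i Re (c (z - 1) ^ m)` has the form `p + conj q` with `deg p ≤ m` and
`deg q = m`. All these zeros are nondegenerate, so they survive the perturbation of `p` to
`p + t z ^ n` for small `t ≠ 0` (`eventually_exists_zero`).
-/

open Polynomial

/-- `Znm n m` is the maximal possible number of zeros of a harmonic polynomial
`p + conj ∘ q` with `deg p = n` and `deg q = m`. -/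
noncomputable def Znm (n m : ℕ) : ℕ :=
  sSup {k : ℕ | ∃ p q : Polynomial ℂ, p.natDegree = n ∧ q.natDegree = m ∧
    k = {z : ℂ | p.eval z + (starRingEnd ℂ) (q.eval z) = 0}.ncard}

/-! ### The upper bound -/

lemma card_zeros_le {n m : ℕ} (hmn : m < n) (p q : ℂ[X]) (hp : p.natDegree = n)
    (hq : q.natDegree = m) (S : Finset ℂ)
    (hS : ∀ z ∈ S, p.eval z + (starRingEnd ℂ) (q.eval z) = 0) : S.card ≤ n ^ 2 := by
  set mon : ℕ → ℕ → S → ℂ := fun i j s => (s : ℂ) ^ i * (starRingEnd ℂ (s : ℂ)) ^ j with hmon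
  set V : Submodule ℂ (S → ℂ) :=
    Submodule.span ℂ (Set.range fun ij : Fin n × Fin n => mon ij.1 ij.2) with hV
  set a := p.coeff n with ha
  have ha0 : a ≠ 0 := by
    rw [ha, ← hp]
    apply leadingCoeff_ne_zero.2
    rintro rfl
    simp at hp
    omega
  have hca0 : starRingEnd ℂ a ≠ 0 := by simpa using ha0
  have key : ∀ s : S, a * (s : ℂ) ^ n = -(∑ k ∈ Finset.range n, p.coeff k * (s : ℂ) ^ k)
      - ∑ l ∈ Finset.range (m + 1), starRingEnd ℂ (q.coeff l) * (starRingEnd ℂ (s : ℂ)) ^ l := by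
    intro s
    have h := hS s s.2
    rw [eval_eq_sum_range, eval_eq_sum_range, hp, hq, Finset.sum_range_succ] at h
    simp only [map_sum, map_mul, map_pow] at h
    linear_combination h
  have key2 : ∀ s : S, starRingEnd ℂ a * (starRingEnd ℂ (s : ℂ)) ^ n =
      -(∑ k ∈ Finset.range n, starRingEnd ℂ (p.coeff k) * (starRingEnd ℂ (s : ℂ)) ^ k)
      - ∑ l ∈ Finset.range (m + 1), q.coeff l * (s : ℂ) ^ l := by
    intro s
    have h := congrArg (starRingEnd ℂ) (key s)
    simpa only [map_sum, map_mul, map_pow, map_neg, map_sub, Complex.conj_conj] using h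
  have hmem : ∀ d i j, i + j = d → mon i j ∈ V := by
    intro d
    induction d using Nat.strong_induction_on with
    | _ d ih =>
      intro i j hd
      by_cases hi : n ≤ i
      · obtain ⟨i, rfl⟩ := Nat.exists_eq_add_of_le hi
        have : mon (n + i) j = (a⁻¹) • (-(∑ k ∈ Finset.range n, p.coeff k • mon (i + k) j)
            - ∑ l ∈ Finset.range (m + 1), starRingEnd ℂ (q.coeff l) • mon i (j + l)) := by
          funext s
          simp only [hmon, Pi.smul_apply, Pi.sub_apply, Pi.neg_apply, Finset.sum_apply, smul_eq_mul]
          rw [eq_inv_mul_iff_mul_eq₀ ha0]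
          have e := congrArg (fun x => x * ((s : ℂ) ^ i * (starRingEnd ℂ (s : ℂ)) ^ j)) (key s)
          simp only [sub_mul, neg_mul, Finset.sum_mul] at e
          calc _ = _ := by ring
            _ = _ := e
            _ = _ := by
              congr 2
              · congr 1; funext k; ring
              · funext k; ring
        rw [this]
        refine V.smul_mem _ (V.sub_mem (V.neg_mem (V.sum_mem fun k hk => V.smul_mem _ ?_))
          (V.sum_mem fun l hl => V.smul_mem _ ?_))
        · rw [Finset.mem_range] at hk
          exact ih _ (by omega) _ _ rfl
        · rw [Finset.mem_range] at hl
          exact ih _ (by omega) _ _ rfl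
      by_cases hj : n ≤ j
      · obtain ⟨j, rfl⟩ := Nat.exists_eq_add_of_le hj
        have : mon i (n + j) = ((starRingEnd ℂ a)⁻¹) •
            (-(∑ k ∈ Finset.range n, starRingEnd ℂ (p.coeff k) • mon i (j + k))
            - ∑ l ∈ Finset.range (m + 1), q.coeff l • mon (i + l) j) := by
          funext s
          simp only [hmon, Pi.smul_apply, Pi.sub_apply, Pi.neg_apply, Finset.sum_apply, smul_eq_mul]
          rw [eq_inv_mul_iff_mul_eq₀ hca0]
          have e := congrArg (fun x => x * ((s : ℂ) ^ i * (starRingEnd ℂ (s : ℂ)) ^ j)) (key2 s)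
          simp only [sub_mul, neg_mul, Finset.sum_mul] at e
          calc _ = _ := by ring
            _ = _ := e
            _ = _ := by
              congr 2
              · congr 1; funext k; ring
              · funext k; ring
        rw [this]
        refine V.smul_mem _ (V.sub_mem (V.neg_mem (V.sum_mem fun k hk => V.smul_mem _ ?_))
          (V.sum_mem fun l hl => V.smul_mem _ ?_))
        · rw [Finset.mem_range] at hk
          exact ih _ (by omega) _ _ rfl
        · rw [Finset.mem_range] at hl
          exact ih _ (by omega) _ _ rfl
      exact Submodule.subset_span ⟨(⟨i, by omega⟩, ⟨j, by omega⟩), rfl⟩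
  have htop : V = ⊤ := by
    rw [eq_top_iff]
    intro f _
    set P := Lagrange.interpolate Finset.univ (fun s : S => (s : ℂ)) f with hP
    have : f = ∑ k ∈ Finset.range (P.natDegree + 1), P.coeff k • mon k 0 := by
      funext s
      have h := Lagrange.eval_interpolate_at_node (s := Finset.univ) (v := fun s : S => (s : ℂ)) f
        (Subtype.val_injective.injOn) (Finset.mem_univ s)
      rw [← hP, eval_eq_sum_range] at h
      rw [← h]
      simp [hmon]
    rw [this]
    exact V.sum_mem fun k _ => V.smul_mem _ (hmem _ _ _ rfl)
  have h1 : Module.finrank ℂ V ≤ Fintype.card (Fin n × Fin n) := finrank_range_le_card _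
  rw [htop, finrank_top, Module.finrank_fintype_fun_eq_card] at h1
  simpa [sq] using h1

lemma zeros_finite_and_ncard_le {n m : ℕ} (hmn : m < n) (p q : ℂ[X]) (hp : p.natDegree = n)
    (hq : q.natDegree = m) :
    {z : ℂ | p.eval z + (starRingEnd ℂ) (q.eval z) = 0}.Finite ∧
    {z : ℂ | p.eval z + (starRingEnd ℂ) (q.eval z) = 0}.ncard ≤ n ^ 2 := by
  have hfin : {z : ℂ | p.eval z + (starRingEnd ℂ) (q.eval z) = 0}.Finite := by
    by_contra hinf
    obtain ⟨S, hS, hc⟩ := Set.Infinite.exists_subset_card_eq hinf (n ^ 2 + 1)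
    have := card_zeros_le hmn p q hp hq S (fun z hz => hS hz)
    omega
  refine ⟨hfin, ?_⟩
  rw [Set.ncard_eq_toFinset_card _ hfin]
  exact card_zeros_le hmn p q hp hq _ (fun z hz => by simpa using hz)

lemma sq_mem_upperBounds_zero_counts {n m : ℕ} (hmn : m < n) :
    n ^ 2 ∈ upperBounds {k : ℕ | ∃ p q : Polynomial ℂ, p.natDegree = n ∧ q.natDegree = m ∧
    k = {z : ℂ | p.eval z + (starRingEnd ℂ) (q.eval z) = 0}.ncard} := by
  rintro k ⟨p, q, hp, hq, rfl⟩
  exact (zeros_finite_and_ncard_le hmn p q hp hq).2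

/-! ### Stability of nondegenerate zeros -/

/-- The real-linear map `v ↦ α v + conj (β v)` is onto as soon as its determinant
`‖α‖ ^ 2 - ‖β‖ ^ 2`, written here as `α * conj α - β * conj β`, is nonzero. -/
lemma exists_mul_add_conj_eq (α β w : ℂ)
    (h : α * starRingEnd ℂ α - β * starRingEnd ℂ β ≠ 0) :
    ∃ v : ℂ, α * v + starRingEnd ℂ (β * v) = w := by
  refine ⟨(starRingEnd ℂ α * w - starRingEnd ℂ β * starRingEnd ℂ w) /
    (α * starRingEnd ℂ α - β * starRingEnd ℂ β), ?_⟩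
  simp only [map_mul, map_div₀, map_sub, Complex.conj_conj]
  rw [mul_comm (starRingEnd ℂ α) α, mul_comm (starRingEnd ℂ β) β]
  obtain ⟨D, hD⟩ : ∃ D, D = α * starRingEnd ℂ α - β * starRingEnd ℂ β := ⟨_, rfl⟩
  rw [← hD] at h ⊢
  field_simp
  rw [hD]
  ring

/-- A nondegenerate zero of `p + conj q` persists under small perturbations `p + t z ^ n`: the map
`(z, t) ↦ (p z + conj (q z) + t z ^ n, t)` has surjective derivative at `(z₀, 0)`, hence is locally
onto. -/
lemma eventually_exists_zero (p q : ℂ[X]) (n : ℕ) (z₀ : ℂ)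
    (h0 : p.eval z₀ + starRingEnd ℂ (q.eval z₀) = 0)
    (hd : p.derivative.eval z₀ * starRingEnd ℂ (p.derivative.eval z₀) -
      q.derivative.eval z₀ * starRingEnd ℂ (q.derivative.eval z₀) ≠ 0)
    {U : Set ℂ} (hU : U ∈ nhds z₀) :
    ∀ᶠ t : ℂ in nhds 0, ∃ z ∈ U, p.eval z + t * z ^ n + starRingEnd ℂ (q.eval z) = 0 := by
  set G : ℂ × ℂ → ℂ × ℂ := fun x =>
    ((p.eval x.1 + starRingEnd ℂ (q.eval x.1)) + x.2 * x.1 ^ n, x.2) with hG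
  have hfst : HasStrictFDerivAt (fun x : ℂ × ℂ => x.1) (ContinuousLinearMap.fst ℝ ℂ ℂ) (z₀, 0) :=
    hasStrictFDerivAt_fst
  have hsnd : HasStrictFDerivAt (fun x : ℂ × ℂ => x.2) (ContinuousLinearMap.snd ℝ ℂ ℂ) (z₀, 0) :=
    hasStrictFDerivAt_snd
  have hpd := HasStrictFDerivAt.comp (z₀, (0 : ℂ))
    ((p.hasStrictDerivAt z₀).hasStrictFDerivAt.restrictScalars ℝ) hfst
  have hqd := HasStrictFDerivAt.comp (z₀, (0 : ℂ))
    ((q.hasStrictDerivAt z₀).hasStrictFDerivAt.restrictScalars ℝ) hfst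
  have hqd2 := HasStrictFDerivAt.comp (z₀, (0 : ℂ))
    ((Complex.conjCLE : ℂ →L[ℝ] ℂ).hasStrictFDerivAt) hqd
  have hm := hsnd.mul (hfst.pow n)
  have hGd := ((hpd.add hqd2).add hm).prodMk hsnd
  have hmap := hGd.map_nhds_eq_of_surj (by
    rw [LinearMap.range_eq_top]
    rintro ⟨w, s⟩
    obtain ⟨v, hv⟩ := exists_mul_add_conj_eq _ _ (w - s * z₀ ^ n) hd
    refine ⟨(v, s), ?_⟩
    simp [mul_comm] at hv ⊢
    linear_combination hv)
  have hUG : U ×ˢ Set.univ ∈ nhds (z₀, (0 : ℂ)) := prod_mem_nhds hU Filter.univ_mem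
  have himg := Filter.image_mem_map (m := G) hUG
  have hG0 : G (z₀, 0) = (0, 0) := by simp [hG, h0]
  have himg2 : G '' (U ×ˢ Set.univ) ∈ nhds ((0 : ℂ), (0 : ℂ)) := by
    rw [← hG0]
    exact hmap ▸ himg
  have hcont : Filter.Tendsto (fun t : ℂ => ((0 : ℂ), t)) (nhds 0) (nhds (0, 0)) :=
    (Continuous.prodMk_right (0 : ℂ)).tendsto 0
  filter_upwards [hcont himg2] with t ht
  obtain ⟨⟨z, s⟩, ⟨hz, -⟩, hzs⟩ := ht
  simp only [hG, Prod.mk.injEq] at hzs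
  obtain ⟨h1, rfl⟩ := hzs
  exact ⟨z, hz, by linear_combination h1⟩

/-! ### The two pencils of lines -/

/-- The numbers `cot θ` with `θ = π (j + τ) / m`, `j < m`: the inverse slopes of `m` lines through
the origin on which `z ^ m` is a real multiple of `exp (π τ i)`. -/
lemma exists_slopes (m : ℕ) (τ : ℝ) (h0 : 0 < τ) (h1 : τ < 1) :
    ∃ a : Fin m → ℝ, Function.Injective a ∧ ∀ j, ∃ r : ℝ, r ≠ 0 ∧
      ((a j : ℂ) + Complex.I) ^ m = r * Complex.exp (Real.pi * τ * Complex.I) := by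
  set θ : Fin m → ℝ := fun j => Real.pi * (j + τ) / m with hθ
  have hmpos : ∀ j : Fin m, (0 : ℝ) < m := fun j => by
    have := j.pos
    exact_mod_cast this
  have hθ0 : ∀ j, 0 < θ j := fun j => by
    have := hmpos j
    have := Real.pi_pos
    simp only [hθ]
    positivity
  have hθ1 : ∀ j, θ j < Real.pi := fun j => by
    have h3 : ((j : ℕ) : ℝ) + 1 ≤ m := by exact_mod_cast j.2
    simp only [hθ]
    rw [div_lt_iff₀ (hmpos j)]
    exact mul_lt_mul_of_pos_left (by linarith) Real.pi_pos
  have hsin : ∀ j, 0 < Real.sin (θ j) := fun j => Real.sin_pos_of_pos_of_lt_pi (hθ0 j) (hθ1 j)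
  have hexp : ∀ j, ((Real.cos (θ j) / Real.sin (θ j) : ℝ) : ℂ) + Complex.I =
      ((Real.sin (θ j))⁻¹ : ℝ) * Complex.exp (θ j * Complex.I) := fun j => by
    have : (Complex.sin (θ j)) ≠ 0 := by exact_mod_cast (hsin j).ne'
    rw [Complex.exp_mul_I]
    push_cast
    field_simp
  refine ⟨fun j => Real.cos (θ j) / Real.sin (θ j), ?_, fun j => ?_⟩
  · intro j k hjk
    have harg : ∀ j, Complex.arg (((Real.cos (θ j) / Real.sin (θ j) : ℝ) : ℂ) + Complex.I) = θ j :=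
      fun j => by
        rw [hexp, Complex.arg_real_mul _ (inv_pos.2 (hsin j)), Complex.exp_mul_I,
          Complex.arg_cos_add_sin_mul_I]
        exact ⟨by linarith [hθ0 j, Real.pi_pos], (hθ1 j).le⟩
    have h2 : θ j = θ k := by
      rw [← harg j, ← harg k]
      simp only at hjk
      rw [hjk]
    have h3 := (hmpos j).ne'
    have h4 := Real.pi_pos.ne'
    simp only [hθ] at h2
    field_simp at h2
    have h5 : ((j : ℕ) : ℝ) = (k : ℕ) := by linarith
    exact Fin.ext (by exact_mod_cast h5)
  · refine ⟨(-1) ^ (j : ℕ) * ((Real.sin (θ j))⁻¹) ^ m,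
      mul_ne_zero (pow_ne_zero _ (by norm_num)) (pow_ne_zero _ (inv_ne_zero (hsin j).ne')), ?_⟩
    have h6 : (m : ℂ) * (θ j * Complex.I) =
        (j : ℕ) * (Real.pi * Complex.I) + Real.pi * τ * Complex.I := by
      have : (m : ℂ) ≠ 0 := by exact_mod_cast (hmpos j).ne'
      simp only [hθ]
      push_cast
      field_simp
    simp only
    rw [hexp, mul_pow, ← Complex.exp_nat_mul, h6, Complex.exp_add, Complex.exp_nat_mul,
      Complex.exp_pi_mul_I]
    push_cast
    ring

/-! ### The lower bound -/

/-- The unperturbed harmonic polynomial: here `p + conj q = Re (z ^ m) + i Re (c (z - 1) ^ m)`,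
and its zeros are the intersections `(a + i) / (a - b)` of the lines `x = a y` and
`x = 1 + b y`. -/
lemma exists_nondegenerate (m : ℕ) :
    ∃ p q : ℂ[X], p.natDegree ≤ m ∧ q.natDegree = m ∧ ∃ f : Fin m × Fin m → ℂ,
      Function.Injective f ∧ ∀ x, p.eval (f x) + starRingEnd ℂ (q.eval (f x)) = 0 ∧
      p.derivative.eval (f x) * starRingEnd ℂ (p.derivative.eval (f x)) -
      q.derivative.eval (f x) * starRingEnd ℂ (q.derivative.eval (f x)) ≠ 0 := by
  obtain ⟨a, ha, hra⟩ := exists_slopes m (1 / 2) (by norm_num) (by norm_num)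
  obtain ⟨b, hb, hrb⟩ := exists_slopes m (1 / 4) (by norm_num) (by norm_num)
  choose r hr0 hr using hra
  choose s hs0 hs using hrb
  set c : ℂ := Complex.exp (Real.pi * ((1 / 4 : ℝ) : ℂ) * Complex.I) with hc
  have hI : Complex.exp (Real.pi * ((1 / 2 : ℝ) : ℂ) * Complex.I) = Complex.I :=
    (congrArg Complex.exp (by push_cast; ring)).trans Complex.exp_pi_div_two_mul_I
  have hcc : c * c = Complex.I := by
    rw [hc, ← Complex.exp_add]
    exact (congrArg Complex.exp (by push_cast; ring)).trans hI
  rw [hI] at hr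
  have hI2 : Complex.I * Complex.I = -1 := Complex.I_mul_I
  have hci : 1 - Complex.I * c ≠ 0 := by
    intro h
    have h2 : -Complex.I = 1 := by linear_combination (-1 - Complex.I * c) * h - c * c * hI2 + hcc
    simpa using congrArg Complex.re h2
  have hab : ∀ j k, a j ≠ b k := by
    intro j k h
    have h1 := hr j
    rw [h, hs k] at h1
    -- squaring removes the square root `c` of `i`, leaving a real multiple of `i` equal to a real
    have h2 : ((s k : ℂ)) ^ 2 * Complex.I = -(r j : ℂ) ^ 2 := by
      linear_combination (s k * c + r j * Complex.I) * h1 + (r j : ℂ) ^ 2 * hI2 - (s k : ℂ) ^ 2 * hcc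
    have h3 := congrArg Complex.im h2
    simp [← Complex.ofReal_pow] at h3
    exact hs0 k h3
  set A : ℂ[X] := X ^ m with hA
  set B : ℂ[X] := C c * (X - C 1) ^ m with hB
  have hAd : A.natDegree ≤ m := by simp [hA]
  have hBd : B.natDegree ≤ m := by
    refine (natDegree_C_mul_le _ _).trans ?_
    simp only [natDegree_pow, natDegree_X_sub_C]
    omega
  have hAc : A.coeff m = 1 := by simp [hA]
  have hBc : B.coeff m = c := by
    have := ((monic_X_sub_C (1 : ℂ)).pow m).coeff_natDegree
    rw [natDegree_pow, natDegree_X_sub_C, mul_one] at this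
    rw [hB, coeff_C_mul, this, mul_one]
  refine ⟨C (1 / 2) * (A + C Complex.I * B), C (1 / 2) * (A - C Complex.I * B), ?_, ?_,
    fun x => (a x.1 + Complex.I) / (a x.1 - b x.2), ?_, ?_⟩
  · exact (natDegree_C_mul_le _ _).trans
      (natDegree_add_le_of_degree_le hAd ((natDegree_C_mul_le _ _).trans hBd))
  · refine natDegree_eq_of_le_of_coeff_ne_zero ((natDegree_C_mul_le _ _).trans
      (natDegree_sub_le_of_le hAd ((natDegree_C_mul_le _ _).trans hBd)|>.trans (by simp))) ?_
    rw [coeff_C_mul, coeff_sub, coeff_C_mul, hAc, hBc]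
    exact mul_ne_zero (by norm_num) hci
  · rintro ⟨j, k⟩ ⟨j', k'⟩ h
    have h1 : a j - b k ≠ 0 := sub_ne_zero.2 (hab _ _)
    have h2 : a j' - b k' ≠ 0 := sub_ne_zero.2 (hab _ _)
    simp only [← Complex.ofReal_sub] at h
    have him := congrArg Complex.im h
    have hre := congrArg Complex.re h
    simp only [Complex.div_ofReal_im, Complex.div_ofReal_re, Complex.add_im, Complex.add_re,
      Complex.ofReal_re, Complex.ofReal_im, Complex.I_re, Complex.I_im, zero_add, add_zero] at him hre
    have h3 : a j - b k = a j' - b k' := by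
      field_simp at him
      linarith
    rw [h3, div_left_inj' h2] at hre
    have h4 : b k = b k' := by linarith
    rw [ha hre, hb h4]
  · rintro ⟨j, k⟩
    have hm0 : (m : ℂ) ≠ 0 := by exact_mod_cast j.pos.ne'
    obtain ⟨l, hl⟩ : ∃ l, m = l + 1 := ⟨m - 1, by have := j.pos; omega⟩
    simp only
    set z : ℂ := (a j + Complex.I) / (a j - b k) with hz
    have h1 : (a j : ℂ) - b k ≠ 0 := by
      exact_mod_cast sub_ne_zero.2 (hab j k)
    have hz1 : z - 1 = (b k + Complex.I) / (a j - b k) := by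
      rw [hz]
      field_simp
      ring
    have hAz : A.eval z = ((r j / (a j - b k) ^ m : ℝ) : ℂ) * Complex.I := by
      simp only [hA, eval_pow, eval_X]
      rw [hz, div_pow, hr]
      push_cast
      ring
    have hBz : B.eval z = ((s k / (a j - b k) ^ m : ℝ) : ℂ) * Complex.I := by
      simp only [hB, eval_mul, eval_pow, eval_sub, eval_X, eval_C]
      rw [hz1, div_pow, hs]
      push_cast
      linear_combination (s k / (a j - b k : ℂ) ^ m) * hcc
    set u : ℝ := r j / (a j - b k) ^ m with hu
    set v : ℝ := s k / (a j - b k) ^ m with hv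
    have h1r : a j - b k ≠ 0 := sub_ne_zero.2 (hab j k)
    have hu0 : u ≠ 0 := div_ne_zero (hr0 j) (pow_ne_zero _ h1r)
    have hv0 : v ≠ 0 := div_ne_zero (hs0 k) (pow_ne_zero _ h1r)
    refine ⟨?_, ?_⟩
    · simp only [eval_mul, eval_add, eval_sub, eval_C, hAz, hBz, map_mul, map_sub, Complex.conj_I,
        Complex.conj_ofReal, map_div₀, map_one, map_ofNat]
      ring
    · set A' := A.derivative.eval z with hA'
      set B' := B.derivative.eval z with hB'
      have eA : A' * z = m * (u * Complex.I) := by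
        rw [← hAz, hA', hA]
        simp only [hl, derivative_X_pow, eval_mul, eval_C, eval_pow, eval_X,
          Nat.add_sub_cancel]
        ring
      have eB : B' * (z - 1) = m * (v * Complex.I) := by
        rw [← hBz, hB', hB]
        simp only [hl, derivative_C_mul, derivative_X_sub_C_pow, eval_mul, eval_C, eval_pow, eval_X,
          eval_sub, Nat.add_sub_cancel]
        ring
      have eB2 : starRingEnd ℂ B' * (starRingEnd ℂ z - 1) = -(m * (v * Complex.I)) := by
        have := congrArg (starRingEnd ℂ) eB
        simpa using this
      have eA2 : starRingEnd ℂ A' * starRingEnd ℂ z = -(m * (u * Complex.I)) := by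
        have := congrArg (starRingEnd ℂ) eA
        simpa using this
      simp only [derivative_C_mul, map_add, map_sub, eval_mul, eval_C, eval_add,
        eval_sub, ← hA', ← hB', map_mul, Complex.conj_I, map_div₀, map_one, map_ofNat]
      intro hcon
      -- the Jacobian determinant is `Im (A' conj B')`
      have h5 : A' * starRingEnd ℂ B' = starRingEnd ℂ A' * B' := by
        have : Complex.I * (A' * starRingEnd ℂ B' - starRingEnd ℂ A' * B') = 0 := by
          linear_combination (-2) * hcon
        have := (mul_eq_zero.1 this).resolve_left Complex.I_ne_zero
        linear_combination this
      -- multiplying by `|z|² |z - 1|²` turns this into `z̄ (z - 1) = z (z̄ - 1)`, that is, `z` real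
      have h6 : (m : ℂ) ^ 2 * u * v * (starRingEnd ℂ z - z) = 0 := by
        have e1 : A' * z * (starRingEnd ℂ B' * (starRingEnd ℂ z - 1)) * (starRingEnd ℂ z * (z - 1)) =
          (starRingEnd ℂ A' * starRingEnd ℂ z) * (B' * (z - 1)) * (z * (starRingEnd ℂ z - 1)) := by
          linear_combination (z * (starRingEnd ℂ z - 1) * starRingEnd ℂ z * (z - 1)) * h5
        rw [eA, eB, eA2, eB2] at e1
        linear_combination -e1 + (m : ℂ) ^ 2 * u * v * (starRingEnd ℂ z - z) * hI2
      have h7 : starRingEnd ℂ z = z := by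
        have hne : (m : ℂ) ^ 2 * u * v ≠ 0 := by
          refine mul_ne_zero (mul_ne_zero (pow_ne_zero _ hm0) ?_) ?_
          · exact_mod_cast hu0
          · exact_mod_cast hv0
        exact sub_eq_zero.1 ((mul_eq_zero.1 h6).resolve_left hne)
      have h8 := Complex.conj_eq_iff_im.1 h7
      rw [hz, ← Complex.ofReal_sub, Complex.div_ofReal_im] at h8
      simp at h8
      exact h1r h8

lemma exists_many_zeros {n m : ℕ} (hmn : m < n) :
    ∃ p q : ℂ[X], p.natDegree = n ∧ q.natDegree = m ∧
      m ^ 2 ≤ {z : ℂ | p.eval z + (starRingEnd ℂ) (q.eval z) = 0}.ncard := by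
  obtain ⟨p, q, hp, hq, f, hf, hfx⟩ := exists_nondegenerate m
  obtain ⟨U, hU, hUd⟩ :=
    (pairwise_disjoint_nhds.comp_of_injective hf).exists_mem_filter_of_disjoint
  have hev : ∀ᶠ t : ℂ in nhds 0, ∀ x, ∃ z ∈ U x,
      p.eval z + t * z ^ n + starRingEnd ℂ (q.eval z) = 0 :=
    Filter.eventually_all.2 fun x =>
      eventually_exists_zero p q n (f x) (hfx x).1 (hfx x).2 (hU x)
  obtain ⟨t, ht, ht0⟩ := ((hev.filter_mono nhdsWithin_le_nhds).and
    (self_mem_nhdsWithin : ({0}ᶜ : Set ℂ) ∈ nhdsWithin 0 {0}ᶜ)).exists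
  choose g hgU hg using ht
  have hgi : Function.Injective g := by
    intro x y hxy
    by_contra hne
    exact Set.disjoint_left.1 (hUd hne) (hgU x) (hxy ▸ hgU y)
  have hdeg : (p + C t * X ^ n).natDegree = n := by
    have h1 : (C t * X ^ n : ℂ[X]).natDegree = n := natDegree_C_mul_X_pow n t ht0
    rw [natDegree_add_eq_right_of_natDegree_lt (by omega), h1]
  refine ⟨p + C t * X ^ n, q, hdeg, hq, ?_⟩
  have hfin := (zeros_finite_and_ncard_le hmn _ q hdeg hq).1
  have hsub : Set.range g ⊆
      {z : ℂ | (p + C t * X ^ n).eval z + (starRingEnd ℂ) (q.eval z) = 0} := by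
    rintro _ ⟨x, rfl⟩
    simpa using hg x
  calc m ^ 2 = (Set.range g).ncard := by
        rw [← Nat.card_coe_set_eq, Nat.card_range_of_injective hgi]
        simp [sq]
    _ ≤ _ := Set.ncard_le_ncard hsub hfin

/-- Corollary: if `m = α n + o(n)` with `0 ≤ α ≤ 1`, then
`limsup_{n → ∞} Z(n, m(n)) / n² ≥ α²`. -/
theorem limsup_Znm_div_sq_ge_alpha_sq (α : ℝ) (hα : α ∈ Set.Icc (0 : ℝ) 1)
    (m : ℕ → ℕ) (hm : ∀ n, 0 < n → m n < n)
    (hlim : Filter.Tendsto (fun n : ℕ => (m n : ℝ) / (n : ℝ)) Filter.atTop (nhds α)) :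
    α ^ 2 ≤ Filter.limsup (fun n : ℕ => (Znm n (m n) : ℝ) / (n : ℝ) ^ 2)
      Filter.atTop := by
  have hlow : ∀ n, 0 < n → m n ^ 2 ≤ Znm n (m n) := fun n hn => by
    obtain ⟨p, q, hp, hq, h⟩ := exists_many_zeros (hm n hn)
    exact h.trans (le_csSup ⟨_, sq_mem_upperBounds_zero_counts (hm n hn)⟩ ⟨p, q, hp, hq, rfl⟩)
  have hup : ∀ n, 0 < n → Znm n (m n) ≤ n ^ 2 := fun n hn => by
    obtain ⟨p, q, hp, hq, h⟩ := exists_many_zeros (hm n hn)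
    exact csSup_le ⟨_, p, q, hp, hq, rfl⟩ (sq_mem_upperBounds_zero_counts (hm n hn))
  rw [← (hlim.pow 2).limsup_eq]
  refine Filter.limsup_le_limsup ?_ (hlim.pow 2).isCoboundedUnder_le ?_
  · filter_upwards [Filter.eventually_gt_atTop 0] with n hn
    rw [div_pow]
    have := hlow n hn
    gcongr
    exact_mod_cast this
  · refine Filter.isBoundedUnder_of_eventually_le (a := 1) ?_
    filter_upwards [Filter.eventually_gt_atTop 0] with n hn
    have := hup n hn
    rw [div_le_one (by positivity)]
    exact_mod_cast this
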